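/- arXiv:1201.1127 — 2 statements merged into one kernel-verified Lean document; each statement's English description precedes it below -/
import Mathlib

section
/- Let R be a commutative ring, A an R-module, and B₁, B₂ : A × A → A two R-bilinear antisymmetric brackets (Bᵢ(f,g) = −Bᵢ(g,f) for all f,g ∈ A). Let c, d : ℕ → A be sequences satisfying the Lenard recursion B₁(f, c(i+1)) = B₂(f, c(i)) and B₁(f, d(i+1)) = B₂(f, d(i)) for all f ∈ A and all i ∈ ℕ, and suppose c(0) is a Casimir of the first bracket, i.e. B₁(f, c(0)) = 0 for all f ∈ A. Then all members of the two hierarchies commute with respect to both brackets: B₁(c(i), d(j)) = 0 and B₂(c(i), d(j)) = 0 for all i, j ∈ ℕ. -/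
/-- Algebraic core of Magri's bihamiltonian recursion theorem: two hierarchies
satisfying the Lenard recursion with respect to a pair of bilinear antisymmetric
brackets, starting from a Casimir of the first bracket, commute with respect to
both brackets. -/
theorem lenard_recursion_commute {R A : Type*} [CommRing R] [AddCommGroup A] [Module R A]
    (B₁ B₂ : A →ₗ[R] A →ₗ[R] A)
    (hB₁ : ∀ f g : A, B₁ f g = - B₁ g f)
    (hB₂ : ∀ f g : A, B₂ f g = - B₂ g f)
    (c d : ℕ → A)
    (hc : ∀ (f : A) (i : ℕ), B₁ f (c (i + 1)) = B₂ f (c i))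
    (hd : ∀ (f : A) (i : ℕ), B₁ f (d (i + 1)) = B₂ f (d i))
    (hc0 : ∀ f : A, B₁ f (c 0) = 0) :
    ∀ i j : ℕ, B₁ (c i) (d j) = 0 ∧ B₂ (c i) (d j) = 0 := by
  -- Moving one step of the recursion from `c` to `d`:
  -- `B₁(c(i+1), d j) = B₂(c i, d j) = B₁(c i, d(j+1))`, down to the Casimir `c 0`.
  have h₁ : ∀ i j : ℕ, B₁ (c i) (d j) = 0 := by
    intro i
    induction i with
    | zero => intro j; rw [hB₁, hc0, neg_zero]
    | succ i ih => intro j; rw [hB₁, hc, ← hB₂, ← hd, ih]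
  exact fun i j => ⟨h₁ i j, by rw [← hd, h₁]⟩
end

section
/- Let E = ℝ^m. For smooth (C^∞) vector fields X, Y : E → E let [X,Y](x) = DY(x)(X(x)) − DX(x)(Y(x)) denote their Lie bracket, where D is the Fréchet derivative. Let N : E → L(E,E) be a smooth field of linear operators with vanishing Nijenhuis torsion, i.e. for all smooth vector fields X, Z: [N·X, N·Z] = N·[N·X, Z] + N·[X, N·Z] − N·(N·[X,Z]), where N·Z denotes the vector field x ↦ N(x)(Z(x)). If a smooth vector field Y is a symmetry of N, i.e. [Y, N·Z] = N·[Y,Z] for every smooth vector field Z, then for every k ∈ ℕ the vector field N^k·Y (pointwise k-fold application of N) is a symmetry of N: [N^k·Y, N·Z] = N·[N^k·Y, Z] for every smooth vector field Z. -/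
/-- Lie bracket of vector fields on ℝ^m: [X,Y](x) = DY(x)(X(x)) − DX(x)(Y(x)). -/
noncomputable def lieB {m : ℕ} (X Y : (Fin m → ℝ) → (Fin m → ℝ)) :
    (Fin m → ℝ) → (Fin m → ℝ) :=
  fun x => fderiv ℝ Y x (X x) - fderiv ℝ X x (Y x)

/-- Pointwise application of a field of linear operators to a vector field. -/
def opApp {m : ℕ} (N : (Fin m → ℝ) → ((Fin m → ℝ) →L[ℝ] (Fin m → ℝ)))
    (Z : (Fin m → ℝ) → (Fin m → ℝ)) : (Fin m → ℝ) → (Fin m → ℝ) :=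
  fun x => N x (Z x)

/-- Pointwise k-fold application of a field of linear operators to a vector field. -/
noncomputable def opPowApp {m : ℕ} (N : (Fin m → ℝ) → ((Fin m → ℝ) →L[ℝ] (Fin m → ℝ))) (k : ℕ)
    (Z : (Fin m → ℝ) → (Fin m → ℝ)) : (Fin m → ℝ) → (Fin m → ℝ) :=
  fun x => ((N x) ^ k) (Z x)

theorem opPowApp_zero {m : ℕ} (N : (Fin m → ℝ) → ((Fin m → ℝ) →L[ℝ] (Fin m → ℝ)))
    (Y : (Fin m → ℝ) → (Fin m → ℝ)) : opPowApp N 0 Y = Y := by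
  funext x
  simp [opPowApp]

theorem opPowApp_succ {m : ℕ} (N : (Fin m → ℝ) → ((Fin m → ℝ) →L[ℝ] (Fin m → ℝ))) (k : ℕ)
    (Y : (Fin m → ℝ) → (Fin m → ℝ)) :
    opPowApp N (k + 1) Y = opApp N (opPowApp N k Y) := by
  funext x
  simp [opPowApp, opApp, pow_succ']

theorem contDiff_opPowApp {m : ℕ} {N : (Fin m → ℝ) → ((Fin m → ℝ) →L[ℝ] (Fin m → ℝ))}
    (hN : ContDiff ℝ (⊤ : ℕ∞) N) {Y : (Fin m → ℝ) → (Fin m → ℝ)}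
    (hY : ContDiff ℝ (⊤ : ℕ∞) Y) (k : ℕ) : ContDiff ℝ (⊤ : ℕ∞) (opPowApp N k Y) := by
  induction k with
  | zero => rwa [opPowApp_zero]
  | succ k ih =>
    rw [opPowApp_succ]
    exact hN.clm_apply ih

/-- Iterated hereditary property: if Y is a symmetry of the Nijenhuis operator N,
then so is N^k·Y for every k. -/
theorem hereditary_symmetry_iter {m : ℕ}
    (N : (Fin m → ℝ) → ((Fin m → ℝ) →L[ℝ] (Fin m → ℝ)))
    (hN : ContDiff ℝ (⊤ : ℕ∞) N)
    (htorsion : ∀ X Z : (Fin m → ℝ) → (Fin m → ℝ), ContDiff ℝ (⊤ : ℕ∞) X → ContDiff ℝ (⊤ : ℕ∞) Z →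
      lieB (opApp N X) (opApp N Z)
        = opApp N (lieB (opApp N X) Z) + opApp N (lieB X (opApp N Z))
          - opApp N (opApp N (lieB X Z)))
    (Y : (Fin m → ℝ) → (Fin m → ℝ)) (hY : ContDiff ℝ (⊤ : ℕ∞) Y)
    (hYsym : ∀ Z : (Fin m → ℝ) → (Fin m → ℝ), ContDiff ℝ (⊤ : ℕ∞) Z →
      lieB Y (opApp N Z) = opApp N (lieB Y Z)) :
    ∀ k : ℕ, ∀ Z : (Fin m → ℝ) → (Fin m → ℝ), ContDiff ℝ (⊤ : ℕ∞) Z →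
      lieB (opPowApp N k Y) (opApp N Z) = opApp N (lieB (opPowApp N k Y) Z) := by
  intro k
  induction k with
  | zero => rwa [opPowApp_zero]
  | succ k ih =>
    intro Z hZ
    -- For the symmetry `X = N^k·Y`, `N·[X, N·Z] = N·(N·[X, Z])`, so the last two terms of the
    -- torsion identity for `[N·X, N·Z]` cancel.
    rw [opPowApp_succ, htorsion _ Z (contDiff_opPowApp hN hY k) hZ, ih Z hZ, add_sub_cancel_right]
end
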